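/- arXiv:2605.21290 — 2 statements merged into one kernel-verified Lean document; each statement's English description precedes it below -/
import Mathlib

section
/- Let A be a ℤ-graded commutative ring, M a ℤ-graded A-module that is finitely generated as an A-module, and I a homogeneous ideal of A such that I ∩ A₀ is contained in the Jacobson radical of the degree-zero subring A₀. If I·M = M, then M = 0. -/
/-!
By the determinant trick there is `r ∈ 1 + I` with `r M = 0`. Since `M` is graded, the degree-zero
component `r₀` of `r` also annihilates `M`: for `m` homogeneous of degree `j`, `r₀ m` is the
degree-`j` component of `r m = 0` (`decompose_smul_coe_of_mem`). Since `I` is homogeneous,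
`r₀ - 1 ∈ I ∩ A₀`, so `r₀` is a unit of `A₀` and `M = 0`.
-/

open SetLike DirectSum

lemma decompose_smul_coe_of_mem
    {A : Type*} [CommRing A] (𝒜 : ℤ → AddSubgroup A) [GradedRing 𝒜]
    {M : Type*} [AddCommGroup M] [Module A M]
    (ℳ : ℤ → AddSubgroup M) [DirectSum.Decomposition ℳ] [SetLike.GradedSMul 𝒜 ℳ]
    (r : A) {j : ℤ} {m : M} (hm : m ∈ ℳ j) :
    (decompose ℳ (r • m) j : M) = (decompose 𝒜 r 0 : A) • m := by
  induction r using DirectSum.Decomposition.inductionOn 𝒜 with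
  | zero => simp
  | @homogeneous i a =>
    have h : (a : A) • m ∈ ℳ (i + j) := SetLike.GradedSMul.smul_mem a.2 hm
    by_cases hi : i = 0
    · subst hi
      rw [zero_add] at h
      rw [decompose_of_mem_same ℳ h, decompose_of_mem_same 𝒜 a.2]
    · rw [decompose_of_mem_ne ℳ h (by omega), decompose_of_mem_ne 𝒜 a.2 hi, zero_smul]
  | add a b ha hb => simp [add_smul, decompose_add, ha, hb]

/-- Graded Nakayama lemma: if `A` is a `ℤ`-graded commutative ring, `M` a `ℤ`-graded
`A`-module which is finitely generated over `A`, and `I` a homogeneous ideal such that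
`I ∩ A₀` is contained in the Jacobson radical of the degree-zero subring `A₀`, then
`I • M = M` implies `M = 0`. -/
theorem graded_nakayama
    (A : Type*) [CommRing A] (𝒜 : ℤ → AddSubgroup A) [GradedRing 𝒜]
    (M : Type*) [AddCommGroup M] [Module A M]
    (ℳ : ℤ → AddSubgroup M) [DirectSum.Decomposition ℳ] [SetLike.GradedSMul 𝒜 ℳ]
    [Module.Finite A M]
    (I : Ideal A) (hI : I.IsHomogeneous 𝒜)
    (hjac : Ideal.comap (SetLike.GradeZero.subring 𝒜).subtype I ≤
      Ideal.jacobson (⊥ : Ideal ↥(SetLike.GradeZero.subring 𝒜)))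
    (hIM : I • (⊤ : Submodule A M) = ⊤) :
    Subsingleton M := by
  obtain ⟨r, hrI, hr⟩ := Submodule.exists_sub_one_mem_and_smul_eq_zero_of_fg_of_le_smul I
    (⊤ : Submodule A M) Module.Finite.fg_top hIM.ge
  let r₀ : SetLike.GradeZero.subring 𝒜 := ⟨decompose 𝒜 r 0, (decompose 𝒜 r 0).2⟩
  have hr₀I : (r₀ : A) - 1 ∈ I := by
    have h := hI 0 hrI
    rwa [decompose_sub, DirectSum.sub_apply, AddSubgroup.coe_sub,
      decompose_of_mem_same 𝒜 SetLike.GradedOne.one_mem] at h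
  have hunit : IsUnit r₀ := by
    have hmem : r₀ - 1 ∈ Ideal.jacobson (⊥ : Ideal (SetLike.GradeZero.subring 𝒜)) :=
      hjac hr₀I
    simpa using Ideal.mem_jacobson_bot.mp hmem 1
  have hann : ∀ m : M, (r₀ : A) • m = 0 := by
    intro m
    induction m using DirectSum.Decomposition.inductionOn ℳ with
    | zero => simp
    | homogeneous m =>
      rw [← decompose_smul_coe_of_mem 𝒜 ℳ r m.2, hr _ trivial]
      simp
    | add a b ha hb => rw [smul_add, ha, hb, add_zero]
  have hunitA : IsUnit (r₀ : A) := hunit.map (SetLike.GradeZero.subring 𝒜).subtype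
  exact subsingleton_of_forall_eq 0 fun m => hunitA.smul_eq_zero.mp (hann m)
end

section
/- Let A be a ℤ-graded commutative ring admitting a homogeneous ideal 𝔪 that contains every proper homogeneous ideal of A. Then the degree-zero subring A₀ is a local ring whose maximal ideal is 𝔪 ∩ A₀. -/
/-!
A degree-zero element `x` is a unit of `A₀` exactly when `x ∉ 𝔪`: if `x ∉ 𝔪`, the homogeneous ideal
`(x)` is all of `A`, so `x` has an inverse in `A`, whose degree-zero component is an inverse in `A₀`.
Hence the nonunits of `A₀` are the elements of `𝔪 ∩ A₀`, and they form an ideal.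
-/

open SetLike DirectSum

/-- If a `ℤ`-graded commutative ring `A` has a proper homogeneous ideal `𝔪` containing
every proper homogeneous ideal (i.e. `A` is graded-local with unique maximal homogeneous
ideal `𝔪`), then the degree-zero subring `A₀` is a local ring with maximal ideal
`𝔪 ∩ A₀`. -/
theorem gradeZero_isLocalRing_of_graded_local
    (A : Type*) [CommRing A] (𝒜 : ℤ → AddSubgroup A) [GradedRing 𝒜]
    (𝔪 : Ideal A) (h𝔪hom : 𝔪.IsHomogeneous 𝒜) (h𝔪ne : 𝔪 ≠ ⊤)
    (hbig : ∀ I : Ideal A, I.IsHomogeneous 𝒜 → I ≠ ⊤ → I ≤ 𝔪) :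
    ∃ h : IsLocalRing ↥(SetLike.GradeZero.subring 𝒜),
      @IsLocalRing.maximalIdeal ↥(SetLike.GradeZero.subring 𝒜) _ h =
        Ideal.comap (SetLike.GradeZero.subring 𝒜).subtype 𝔪 := by
  have key : ∀ x : ↥(SetLike.GradeZero.subring 𝒜), ¬IsUnit x ↔ (x : A) ∈ 𝔪 := by
    intro x
    constructor
    · intro hx
      refine hbig (Ideal.span {(x : A)}) ?_ ?_ (Ideal.mem_span_singleton_self _)
      · exact Ideal.homogeneous_span 𝒜 _ fun y hy => ⟨0, hy ▸ x.2⟩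
      · intro htop
        obtain ⟨b, hb⟩ := isUnit_iff_exists_inv.mp (Ideal.span_singleton_eq_top.mp htop)
        -- The degree-zero component of an inverse of `x` in `A` is again an inverse of `x`.
        have h0 := coe_decompose_mul_of_left_mem_zero 𝒜 (j := 0) (b := b) x.2
        rw [hb, decompose_of_mem_same 𝒜 SetLike.GradedOne.one_mem] at h0
        exact hx (isUnit_iff_exists_inv.mpr
          ⟨⟨decompose 𝒜 b 0, (decompose 𝒜 b 0).2⟩, Subtype.ext h0.symm⟩)
    · intro hx hu
      exact h𝔪ne (𝔪.eq_top_of_isUnit_mem hx (hu.map (SetLike.GradeZero.subring 𝒜).subtype))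
  have : Nontrivial ↥(SetLike.GradeZero.subring 𝒜) := by
    refine ⟨0, 1, fun h => ?_⟩
    exact (key 1).mpr (by rw [← h]; exact 𝔪.zero_mem) isUnit_one
  have hloc : IsLocalRing ↥(SetLike.GradeZero.subring 𝒜) :=
    IsLocalRing.of_nonunits_add fun a b ha hb =>
      (key (a + b)).mpr (𝔪.add_mem ((key a).mp ha) ((key b).mp hb))
  refine ⟨hloc, ?_⟩
  ext x
  exact (IsLocalRing.mem_maximalIdeal x).trans (key x)
end
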